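/- Let c ∈ ℂ, R > 0, and let f : ℂ → ℂ be analytic on an open set containing the closed disk of center c and radius R. Let z1, z2 be distinct points of the open disk of center c and radius R, and let z be any point of the open disk. Then for every N ≥ 1, f(z) − Σ_{n=0}^{N−1} [a_n(z1,z2)(z−z1) + a_n(z2,z1)(z−z2)]·((z−z1)(z−z2))^n = (1/(2πi)) · ∮_{|w−c|=R} f(w)·(z−z1)^N (z−z2)^N / ((w−z1)^N (w−z2)^N (w−z)) dw, where the integral is the circle integral over the circle of center c and radius R traversed counterclockwise. -/

import Mathlib

/-- The two-point Taylor coefficient `a_n(z1, z2)` of `f` at the points `z1, z2`. -/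
noncomputable def twoPointCoeff (f : ℂ → ℂ) (z1 z2 : ℂ) (n : ℕ) : ℂ :=
  if n = 0 then f z2 / (z2 - z1)
  else ∑ k ∈ Finset.range (n + 1),
    ((Nat.factorial (n + k - 1) : ℂ) / ((Nat.factorial k : ℂ) * (Nat.factorial (n - k) : ℂ))) *
      (((-1 : ℂ) ^ (n + 1) * (n : ℂ) * iteratedDeriv (n - k) f z2
          + (-1 : ℂ) ^ k * (k : ℂ) * iteratedDeriv (n - k) f z1)
        / ((Nat.factorial n : ℂ) * (z1 - z2) ^ (n + k + 1)))

/-!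
With `q = (z - z1) (z - z2)` and `Q = (w - z1) (w - z2)` one has
`Q - q = (w - z) (w + z - z1 - z2)`, so summing a geometric series in `q / Q` gives the two-point
expansion of the Cauchy kernel `1 / (w - z)`, with remainder `(q / Q) ^ N / (w - z)`. Integrating
it against `f` yields the claim with coefficients
`(z2 - z1)⁻¹ (2πi)⁻¹ ∮ f(w) / ((w - z1)ⁿ (w - z2)ⁿ⁺¹) dw`. Expanding
`1 / ((w - z1)ⁿ (w - z2)ⁿ⁺¹)` in partial fractions and applying Cauchy's formula for derivatives
to each term identifies these with `twoPointCoeff`.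
-/

open Metric Nat

section PartialFractions

/-- The residue at `y = 0` of `(y + e)⁻ᵃ y⁻ᵇ g(y)`, where `u j` is the `j`-th Taylor coefficient
of `g` at `0`: by the binomial series, the coefficient of `y ^ (b - 1)` in `(y + e)⁻ᵃ g(y)`.
Allowing arbitrary `u` makes it also the principal part of a partial fraction expansion. -/
def residueSum {K M : Type*} [Field K] [AddCommGroup M] [Module K M]
    (e : K) (a : ℕ) (u : ℕ → M) (b : ℕ) : M :=
  ∑ k ∈ Finset.range b, ((a.multichoose k : K) * (-1) ^ k * (e ^ (a + k))⁻¹) • u (b - 1 - k)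

variable {K M : Type*} [Field K] [AddCommGroup M] [Module K M]

theorem residueSum_zero_right (e : K) (a : ℕ) (u : ℕ → M) : residueSum e a u 0 = 0 := by
  simp [residueSum]

theorem residueSum_zero_succ (e : K) (u : ℕ → M) (b : ℕ) : residueSum e 0 u (b + 1) = u b := by
  simp [residueSum, Finset.sum_range_succ']

theorem residueSum_succ_succ (e : K) (a : ℕ) (u : ℕ → M) (b : ℕ) :
    residueSum e (a + 1) u (b + 1)
      = e⁻¹ • (residueSum e a u (b + 1) - residueSum e (a + 1) u b) := by
  unfold residueSum
  rw [Finset.sum_range_succ', Finset.sum_range_succ' _ b, add_sub_right_comm,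
    ← Finset.sum_sub_distrib, smul_add, Finset.smul_sum]
  congr 1
  · refine Finset.sum_congr rfl fun k _ => ?_
    rw [multichoose_succ_succ, show b + 1 - 1 - (k + 1) = b - 1 - k by lia, ← sub_smul, smul_smul]
    congr 1
    push_cast
    simp only [pow_add, pow_one, mul_inv]
    ring
  · rw [smul_smul]
    congr 1
    simp only [pow_add, pow_one, mul_inv, multichoose_zero_right]
    ring

theorem residueSum_smul (e : K) (a : ℕ) (u : ℕ → K) (b : ℕ) (x : M) :
    residueSum e a u b • x = residueSum e a (fun j => u j • x) b := by
  simp only [residueSum, Finset.sum_smul, smul_assoc]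

theorem smul_residueSum (s e : K) (a : ℕ) (u : ℕ → M) (b : ℕ) :
    s • residueSum e a u b = residueSum e a (fun j => s • u j) b := by
  simp only [residueSum, Finset.smul_sum, smul_comm s]

theorem inv_pow_mul_pow_eq_residueSum_add_residueSum {x y : K} (hx : x ≠ 0) (hy : y ≠ 0)
    (hxy : x ≠ y) {a b : ℕ} (hab : a + b ≠ 0) :
    (x ^ a * y ^ b)⁻¹ = residueSum (x - y) a (fun j => (y ^ (j + 1))⁻¹) b
      + residueSum (y - x) b (fun j => (x ^ (j + 1))⁻¹) a := by
  induction a generalizing b with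
  | zero =>
    obtain ⟨b, rfl⟩ := exists_eq_succ_of_ne_zero (by simpa using hab)
    simp [residueSum_zero_right, residueSum_zero_succ]
  | succ a ih_a =>
    induction b with
    | zero => simp [residueSum_zero_right, residueSum_zero_succ]
    | succ b ih_b =>
      have split_factor : (x ^ (a + 1) * y ^ (b + 1))⁻¹
          = (x - y)⁻¹ * ((x ^ a * y ^ (b + 1))⁻¹ - (x ^ (a + 1) * y ^ b)⁻¹) := by
        have := sub_ne_zero.2 hxy
        field_simp
        ring
      rw [split_factor, ih_a (by lia), ih_b (by lia), residueSum_succ_succ, residueSum_succ_succ,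
        ← neg_sub x y, inv_neg]
      simp only [smul_eq_mul]
      ring

end PartialFractions

section CauchyIntegral

theorem sub_ne_zero_of_mem_sphere_of_mem_ball {V : Type*} [SeminormedAddCommGroup V] {c w z : V}
    {R : ℝ} (hw : w ∈ sphere c R) (hz : z ∈ ball c R) : w - z ≠ 0 :=
  sub_ne_zero.2 (sphere_disjoint_ball.ne_of_mem hw hz)

variable {E : Type*} [NormedAddCommGroup E] [NormedSpace ℂ E] {f : ℂ → E} {c : ℂ} {R : ℝ}

/-- The `n`-th Taylor coefficient of `f` at `z`, the value of the normalized Cauchy integral of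
`f(w) / (w - z)ⁿ⁺¹`. -/
noncomputable def taylorCoeff (f : ℂ → E) (z : ℂ) (n : ℕ) : E :=
  (n ! : ℂ)⁻¹ • iteratedDeriv n f z

theorem circleIntegrable_inv_sub_pow_smul (hf : DiffContOnCl ℂ f (ball c R)) {z : ℂ}
    (hz : z ∈ ball c R) (n : ℕ) : CircleIntegrable (fun w => ((w - z) ^ n)⁻¹ • f w) c R := by
  have hfc : ContinuousOn f (sphere c R) := hf.continuousOn_ball.mono sphere_subset_closedBall
  refine ContinuousOn.circleIntegrable (pos_of_mem_ball hz).le (.smul (.inv₀ (by fun_prop) ?_) hfc)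
  exact fun w hw => pow_ne_zero n (sub_ne_zero_of_mem_sphere_of_mem_ball hw hz)

theorem circleIntegrable_residueSum (e : ℂ) (a : ℕ) {g : ℕ → ℂ → E} (b : ℕ)
    (hg : ∀ j, CircleIntegrable (g j) c R) :
    CircleIntegrable (fun w => residueSum e a (fun j => g j w) b) c R :=
  .fun_sum _ fun _ _ => (hg _).fun_continuousOn_smul continuousOn_const

theorem circleIntegral_residueSum (e : ℂ) (a : ℕ) {g : ℕ → ℂ → E} (b : ℕ)
    (hg : ∀ j, CircleIntegrable (g j) c R) :
    (∮ w in C(c, R), residueSum e a (fun j => g j w) b)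
      = residueSum e a (fun j => ∮ w in C(c, R), g j w) b := by
  simp only [residueSum]
  rw [circleIntegral.integral_fun_sum fun k _ => (hg _).fun_continuousOn_smul continuousOn_const]
  simp only [circleIntegral.integral_smul]

variable [CompleteSpace E]

theorem diffContOnCl_dslope (hf : DiffContOnCl ℂ f (ball c R)) {z : ℂ} (hz : z ∈ ball c R) :
    DiffContOnCl ℂ (dslope f z) (ball c R) := by
  have hball : ball c R ∈ nhds z := isOpen_ball.mem_nhds hz
  exact ⟨(Complex.differentiableOn_dslope hball).2 hf.differentiableOn,
    (continuousOn_dslope (Filter.mem_of_superset hball subset_closure)).2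
      ⟨hf.continuousOn, hf.differentiableOn.differentiableAt hball⟩⟩

theorem circleIntegral_inv_sub_pow_add_two_smul_eq_dslope (hf : DiffContOnCl ℂ f (ball c R))
    {z : ℂ} (hz : z ∈ ball c R) (n : ℕ) :
    (∮ w in C(c, R), ((w - z) ^ (n + 2))⁻¹ • f w)
      = ∮ w in C(c, R), ((w - z) ^ (n + 1))⁻¹ • dslope f z w := by
  have hR : 0 ≤ R := (pos_of_mem_ball hz).le
  have split_f : Set.EqOn (fun w => ((w - z) ^ (n + 2))⁻¹ • f w)
      (fun w => ((w - z) ^ (n + 1))⁻¹ • dslope f z w + ((w - z) ^ (n + 2))⁻¹ • f z)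
      (sphere c R) := fun w hw => by
    have hwz := sub_ne_zero_of_mem_sphere_of_mem_ball hw hz
    have hfw : f w = (w - z) • dslope f z w + f z := by simp [sub_smul_dslope]
    have hpow : ((w - z) ^ (n + 2))⁻¹ * (w - z) = ((w - z) ^ (n + 1))⁻¹ := by
      rw [pow_succ' _ (n + 1), mul_inv_rev, inv_mul_cancel_right₀ hwz]
    simp only [hfw, smul_add, smul_smul, hpow]
  have integral_const : (∮ w in C(c, R), ((w - z) ^ (n + 2))⁻¹ • f z) = 0 := by
    have h := circleIntegral.integral_sub_zpow_of_ne (n := -((n + 2 : ℕ) : ℤ)) (by lia) c z R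
    simp only [zpow_neg, zpow_natCast] at h
    rw [circleIntegral.integral_smul_const, h, zero_smul]
  rw [circleIntegral.integral_congr hR split_f, circleIntegral.integral_add, integral_const,
    add_zero]
  · exact circleIntegrable_inv_sub_pow_smul (diffContOnCl_dslope hf hz) hz (n + 1)
  · exact circleIntegrable_inv_sub_pow_smul diffContOnCl_const hz (n + 2)

theorem circleIntegral_inv_sub_pow_smul {p : FormalMultilinearSeries ℂ ℂ E} {z : ℂ}
    (hf : DiffContOnCl ℂ f (ball c R)) (hz : z ∈ ball c R) (hp : HasFPowerSeriesAt f p z) (n : ℕ) :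
    (∮ w in C(c, R), ((w - z) ^ (n + 1))⁻¹ • f w)
      = (2 * Real.pi * Complex.I : ℂ) • p.coeff n := by
  induction n generalizing f p with
  | zero =>
    have hp0 : p.coeff 0 = f z := hp.coeff_zero 1
    simpa [hp0] using hf.circleIntegral_sub_inv_smul hz
  | succ n ih =>
    rw [circleIntegral_inv_sub_pow_add_two_smul_eq_dslope hf hz,
      ih (diffContOnCl_dslope hf hz) hp.has_fpower_series_dslope_fslope,
      FormalMultilinearSeries.coeff_fslope]

theorem coeff_eq_taylorCoeff {p : FormalMultilinearSeries ℂ ℂ E} {z : ℂ}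
    (hp : HasFPowerSeriesAt f p z) (n : ℕ) : p.coeff n = taylorCoeff f z n := by
  obtain ⟨r, hr⟩ := hp
  have h := hr.factorial_smul 1 n
  rw [← iteratedDeriv_eq_iteratedFDeriv, ← Nat.cast_smul_eq_nsmul ℂ] at h
  rw [taylorCoeff, ← h, inv_smul_smul₀ (mod_cast n.factorial_ne_zero)]
  rfl

theorem two_pi_I_inv_smul_circleIntegral_inv_sub_pow_smul (hf : DiffContOnCl ℂ f (ball c R))
    {z : ℂ} (hz : z ∈ ball c R) (n : ℕ) :
    (2 * Real.pi * Complex.I : ℂ)⁻¹ • (∮ w in C(c, R), ((w - z) ^ (n + 1))⁻¹ • f w)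
      = taylorCoeff f z n := by
  obtain ⟨p, hp⟩ := hf.differentiableOn.analyticAt (isOpen_ball.mem_nhds hz)
  rw [circleIntegral_inv_sub_pow_smul hf hz hp, inv_smul_smul₀ Complex.two_pi_I_ne_zero,
    coeff_eq_taylorCoeff hp]

theorem two_pi_I_inv_smul_circleIntegral_inv_sub_pow_mul_sub_pow_smul
    (hf : DiffContOnCl ℂ f (ball c R)) {z1 z2 : ℂ} (hz1 : z1 ∈ ball c R) (hz2 : z2 ∈ ball c R)
    (h12 : z1 ≠ z2) {a b : ℕ} (hab : a + b ≠ 0) :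
    (2 * Real.pi * Complex.I : ℂ)⁻¹ • (∮ w in C(c, R), ((w - z1) ^ a * (w - z2) ^ b)⁻¹ • f w)
      = residueSum (z2 - z1) a (taylorCoeff f z2) b
        + residueSum (z1 - z2) b (taylorCoeff f z1) a := by
  have hint1 (j : ℕ) := circleIntegrable_inv_sub_pow_smul hf hz1 (j + 1)
  have hint2 (j : ℕ) := circleIntegrable_inv_sub_pow_smul hf hz2 (j + 1)
  have partial_fractions : Set.EqOn (fun w => ((w - z1) ^ a * (w - z2) ^ b)⁻¹ • f w)
      (fun w => residueSum (z2 - z1) a (fun j => ((w - z2) ^ (j + 1))⁻¹ • f w) b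
        + residueSum (z1 - z2) b (fun j => ((w - z1) ^ (j + 1))⁻¹ • f w) a) (sphere c R) :=
    fun w hw => by
      simp only [inv_pow_mul_pow_eq_residueSum_add_residueSum
        (sub_ne_zero_of_mem_sphere_of_mem_ball hw hz1)
        (sub_ne_zero_of_mem_sphere_of_mem_ball hw hz2) (sub_right_injective.ne h12) hab,
        add_smul, residueSum_smul, sub_sub_sub_cancel_left]
  rw [circleIntegral.integral_congr (pos_of_mem_ball hz1).le partial_fractions,
    circleIntegral.integral_add (circleIntegrable_residueSum _ _ _ hint2)
      (circleIntegrable_residueSum _ _ _ hint1),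
    circleIntegral_residueSum _ _ _ hint2, circleIntegral_residueSum _ _ _ hint1, smul_add,
    smul_residueSum, smul_residueSum]
  simp only [two_pi_I_inv_smul_circleIntegral_inv_sub_pow_smul hf hz1,
    two_pi_I_inv_smul_circleIntegral_inv_sub_pow_smul hf hz2]

end CauchyIntegral

section TwoPointExpansion

theorem natCast_multichoose_succ (K : Type*) [DivisionSemiring K] [CharZero K] (n k : ℕ) :
    ((n + 1).multichoose k : K) = (n + k)! / (k ! * n !) := by
  rw [multichoose_eq, show n + 1 + k - 1 = k + n by lia, add_comm n k, cast_add_choose]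

theorem inv_mul_residueSum_taylorCoeff_right (f : ℂ → ℂ) {z1 z2 : ℂ} (h12 : z1 ≠ z2) (n : ℕ) :
    (z2 - z1)⁻¹ * residueSum (z2 - z1) (n + 1) (taylorCoeff f z2) (n + 2)
      = ∑ k ∈ Finset.range (n + 2), ((n + k)! : ℂ) / (k ! * (n + 1 - k)!) *
          ((-1) ^ (n + 2) * (n + 1) * iteratedDeriv (n + 1 - k) f z2
            / ((n + 1)! * (z1 - z2) ^ (n + k + 2))) := by
  have hd : z1 - z2 ≠ 0 := sub_ne_zero.2 h12
  have hn : (n ! : ℂ) ≠ 0 := mod_cast n.factorial_ne_zero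
  rw [residueSum, Finset.mul_sum, ← neg_sub z1 z2]
  refine Finset.sum_congr rfl fun k _ => ?_
  have hsign : (-(z1 - z2))⁻¹ * ((-1) ^ k * ((-(z1 - z2)) ^ (n + 1 + k))⁻¹)
      = (-1) ^ (n + 2) / (z1 - z2) ^ (n + k + 2) := by
    obtain sn | sn := neg_one_pow_eq_or ℂ n <;> obtain sk | sk := neg_one_pow_eq_or ℂ k <;>
      simp only [neg_pow (z1 - z2), pow_succ, pow_add, sn, sk] <;> field_simp
  calc
    _ = (-(z1 - z2))⁻¹ * ((-1) ^ k * ((-(z1 - z2)) ^ (n + 1 + k))⁻¹) *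
          ((n + k)! / (k ! * n !)) * (((n + 1 - k)! : ℂ)⁻¹ * iteratedDeriv (n + 1 - k) f z2) := by
      rw [natCast_multichoose_succ, taylorCoeff, smul_eq_mul, smul_eq_mul,
        show n + 2 - 1 - k = n + 1 - k by lia]
      ring
    _ = _ := by
      rw [hsign, Nat.factorial_succ n]
      push_cast
      field_simp

theorem inv_mul_residueSum_taylorCoeff_left (f : ℂ → ℂ) {z1 z2 : ℂ} (h12 : z1 ≠ z2) (n : ℕ) :
    (z2 - z1)⁻¹ * residueSum (z1 - z2) (n + 2) (taylorCoeff f z1) (n + 1)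
      = ∑ k ∈ Finset.range (n + 2), ((n + k)! : ℂ) / (k ! * (n + 1 - k)!) *
          ((-1) ^ k * k * iteratedDeriv (n + 1 - k) f z1
            / ((n + 1)! * (z1 - z2) ^ (n + k + 2))) := by
  have hd : z1 - z2 ≠ 0 := sub_ne_zero.2 h12
  rw [residueSum, Finset.mul_sum, Finset.sum_range_succ' _ (n + 1), ← neg_sub z1 z2]
  simp only [cast_zero, mul_zero, zero_mul, zero_div, add_zero]
  refine Finset.sum_congr rfl fun k _ => ?_
  have hk : (k ! : ℂ) ≠ 0 := mod_cast k.factorial_ne_zero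
  rw [natCast_multichoose_succ, taylorCoeff, smul_eq_mul, smul_eq_mul, Nat.add_sub_cancel,
    Nat.add_sub_add_right, Nat.factorial_succ k, show n + (k + 1) = n + 1 + k by lia]
  push_cast
  field_simp
  ring

theorem twoPointCoeff_eq_residueSum_add_residueSum (f : ℂ → ℂ) {z1 z2 : ℂ} (h12 : z1 ≠ z2)
    (n : ℕ) :
    twoPointCoeff f z1 z2 n = (z2 - z1)⁻¹ *
      (residueSum (z2 - z1) n (taylorCoeff f z2) (n + 1)
        + residueSum (z1 - z2) (n + 1) (taylorCoeff f z1) n) := by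
  cases n with
  | zero =>
    simp [twoPointCoeff, residueSum_zero_right, residueSum_zero_succ, taylorCoeff, div_eq_inv_mul]
  | succ n =>
    rw [mul_add, inv_mul_residueSum_taylorCoeff_right f h12,
      inv_mul_residueSum_taylorCoeff_left f h12, ← Finset.sum_add_distrib, twoPointCoeff,
      if_neg n.succ_ne_zero]
    refine Finset.sum_congr rfl fun k _ => ?_
    rw [show n + 1 + k - 1 = n + k by lia, show n + 1 + k + 1 = n + k + 2 by lia, ← mul_add,
      ← add_div, cast_succ]

/-- The coefficient `a_n(z1, z2)` of the Cauchy kernel `z ↦ (w - z)⁻¹`, as a function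
of `w`; integrating it against `f` gives the coefficient of `f`. -/
def cauchyKernelCoeff {K : Type*} [Field K] (z1 z2 : K) (n : ℕ) (w : K) : K :=
  (z2 - z1)⁻¹ * ((w - z1) ^ n * (w - z2) ^ (n + 1))⁻¹

theorem inv_sub_eq_sum_cauchyKernelCoeff_add_remainder {K : Type*} [Field K] {z1 z2 z w : K}
    (h12 : z1 ≠ z2) (hw1 : w - z1 ≠ 0) (hw2 : w - z2 ≠ 0) (hwz : w - z ≠ 0) (N : ℕ) :
    (w - z)⁻¹ = ∑ n ∈ Finset.range N,
        (cauchyKernelCoeff z1 z2 n w * (z - z1) + cauchyKernelCoeff z2 z1 n w * (z - z2)) *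
          ((z - z1) * (z - z2)) ^ n
      + (z - z1) ^ N * (z - z2) ^ N / ((w - z1) ^ N * (w - z2) ^ N * (w - z)) := by
  induction N with
  | zero => simp
  | succ N ih =>
    have hd : z2 - z1 ≠ 0 := sub_ne_zero.2 h12.symm
    rw [Finset.sum_range_succ, add_assoc]
    refine ih.trans (congrArg _ ?_)
    rw [cauchyKernelCoeff, cauchyKernelCoeff, ← neg_sub z2 z1, mul_pow]
    field_simp
    ring

variable {f : ℂ → ℂ} {c : ℂ} {R : ℝ} {z1 z2 : ℂ}

theorem two_pi_I_inv_mul_circleIntegral_cauchyKernelCoeff_mul (hf : DiffContOnCl ℂ f (ball c R))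
    (hz1 : z1 ∈ ball c R) (hz2 : z2 ∈ ball c R) (h12 : z1 ≠ z2) (n : ℕ) :
    (2 * Real.pi * Complex.I : ℂ)⁻¹ * (∮ w in C(c, R), cauchyKernelCoeff z1 z2 n w * f w)
      = twoPointCoeff f z1 z2 n := by
  rw [twoPointCoeff_eq_residueSum_add_residueSum f h12,
    ← two_pi_I_inv_smul_circleIntegral_inv_sub_pow_mul_sub_pow_smul hf hz1 hz2 h12 (by lia)]
  simp only [cauchyKernelCoeff, mul_assoc, circleIntegral.integral_const_mul, smul_eq_mul]
  ring

theorem continuousOn_sphere_cauchyKernelCoeff (hz1 : z1 ∈ ball c R) (hz2 : z2 ∈ ball c R)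
    (n : ℕ) : ContinuousOn (cauchyKernelCoeff z1 z2 n) (sphere c R) := by
  refine continuousOn_const.mul (.inv₀ (by fun_prop) fun w hw => mul_ne_zero ?_ ?_)
  · exact pow_ne_zero _ (sub_ne_zero_of_mem_sphere_of_mem_ball hw hz1)
  · exact pow_ne_zero _ (sub_ne_zero_of_mem_sphere_of_mem_ball hw hz2)

theorem circleIntegrable_cauchyKernelCoeff_mul (hf : DiffContOnCl ℂ f (ball c R))
    (hz1 : z1 ∈ ball c R) (hz2 : z2 ∈ ball c R) (n : ℕ) :
    CircleIntegrable (fun w => cauchyKernelCoeff z1 z2 n w * f w) c R :=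
  ContinuousOn.circleIntegrable (pos_of_mem_ball hz1).le
    ((continuousOn_sphere_cauchyKernelCoeff hz1 hz2 n).mul
      (hf.continuousOn_ball.mono sphere_subset_closedBall))

theorem circleIntegrable_cauchyKernelCoeff_combination_mul (hf : DiffContOnCl ℂ f (ball c R))
    (hz1 : z1 ∈ ball c R) (hz2 : z2 ∈ ball c R) (n : ℕ) (α β γ : ℂ) :
    CircleIntegrable (fun w =>
      (cauchyKernelCoeff z1 z2 n w * α + cauchyKernelCoeff z2 z1 n w * β) * γ * f w) c R := by
  have hfc : ContinuousOn f (sphere c R) := hf.continuousOn_ball.mono sphere_subset_closedBall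
  have hκ12 := continuousOn_sphere_cauchyKernelCoeff hz1 hz2 n
  have hκ21 := continuousOn_sphere_cauchyKernelCoeff hz2 hz1 n
  exact ContinuousOn.circleIntegrable (pos_of_mem_ball hz1).le (by fun_prop)

theorem two_pi_I_inv_mul_circleIntegral_cauchyKernelCoeff_combination_mul
    (hf : DiffContOnCl ℂ f (ball c R)) (hz1 : z1 ∈ ball c R) (hz2 : z2 ∈ ball c R)
    (h12 : z1 ≠ z2) (n : ℕ) (α β γ : ℂ) :
    (2 * Real.pi * Complex.I : ℂ)⁻¹ * (∮ w in C(c, R),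
        (cauchyKernelCoeff z1 z2 n w * α + cauchyKernelCoeff z2 z1 n w * β) * γ * f w)
      = (twoPointCoeff f z1 z2 n * α + twoPointCoeff f z2 z1 n * β) * γ := by
  have distribute (w : ℂ) :
      (cauchyKernelCoeff z1 z2 n w * α + cauchyKernelCoeff z2 z1 n w * β) * γ * f w
        = (α * γ) • (cauchyKernelCoeff z1 z2 n w * f w)
          + (β * γ) • (cauchyKernelCoeff z2 z1 n w * f w) := by
    simp only [smul_eq_mul]
    ring
  simp only [distribute]
  rw [circleIntegral.integral_add
      (circleIntegrable_cauchyKernelCoeff_mul hf hz1 hz2 n).const_fun_smul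
      (circleIntegrable_cauchyKernelCoeff_mul hf hz2 hz1 n).const_fun_smul,
    circleIntegral.integral_smul, circleIntegral.integral_smul,
    ← two_pi_I_inv_mul_circleIntegral_cauchyKernelCoeff_mul hf hz1 hz2 h12,
    ← two_pi_I_inv_mul_circleIntegral_cauchyKernelCoeff_mul hf hz2 hz1 h12.symm, smul_eq_mul,
    smul_eq_mul]
  ring

theorem circleIntegrable_twoPointTaylor_remainder (hf : DiffContOnCl ℂ f (ball c R))
    (hz1 : z1 ∈ ball c R) (hz2 : z2 ∈ ball c R) {z : ℂ} (hz : z ∈ ball c R) (N : ℕ) :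
    CircleIntegrable (fun w => f w * (z - z1) ^ N * (z - z2) ^ N /
      ((w - z1) ^ N * (w - z2) ^ N * (w - z))) c R := by
  have hfc : ContinuousOn f (sphere c R) := hf.continuousOn_ball.mono sphere_subset_closedBall
  refine ContinuousOn.circleIntegrable (pos_of_mem_ball hz).le
    (.div (by fun_prop) (by fun_prop) fun w hw => mul_ne_zero (mul_ne_zero ?_ ?_) ?_)
  · exact pow_ne_zero _ (sub_ne_zero_of_mem_sphere_of_mem_ball hw hz1)
  · exact pow_ne_zero _ (sub_ne_zero_of_mem_sphere_of_mem_ball hw hz2)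
  · exact sub_ne_zero_of_mem_sphere_of_mem_ball hw hz

theorem twoPointTaylor_remainder_eq_circleIntegral_general (hf : DiffContOnCl ℂ f (ball c R))
    (hz1 : z1 ∈ ball c R) (hz2 : z2 ∈ ball c R) (h12 : z1 ≠ z2) {z : ℂ} (hz : z ∈ ball c R)
    (N : ℕ) :
    f z - ∑ n ∈ Finset.range N,
        (twoPointCoeff f z1 z2 n * (z - z1) + twoPointCoeff f z2 z1 n * (z - z2)) *
          ((z - z1) * (z - z2)) ^ n
      = (1 / (2 * Real.pi * Complex.I)) *
          ∮ w in C(c, R), f w * (z - z1) ^ N * (z - z2) ^ N /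
            ((w - z1) ^ N * (w - z2) ^ N * (w - z)) := by
  have kernel_expansion : Set.EqOn (fun w => (w - z)⁻¹ • f w)
      (fun w => ∑ n ∈ Finset.range N,
          (cauchyKernelCoeff z1 z2 n w * (z - z1) + cauchyKernelCoeff z2 z1 n w * (z - z2)) *
            ((z - z1) * (z - z2)) ^ n * f w
        + f w * (z - z1) ^ N * (z - z2) ^ N / ((w - z1) ^ N * (w - z2) ^ N * (w - z)))
      (sphere c R) := fun w hw => by
    simp only [smul_eq_mul, inv_sub_eq_sum_cauchyKernelCoeff_add_remainder h12
      (sub_ne_zero_of_mem_sphere_of_mem_ball hw hz1) (sub_ne_zero_of_mem_sphere_of_mem_ball hw hz2)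
      (sub_ne_zero_of_mem_sphere_of_mem_ball hw hz) N, add_mul _ _ (f w), ← Finset.sum_mul]
    ring
  have hterm (n : ℕ) (_ : n ∈ Finset.range N) :=
    circleIntegrable_cauchyKernelCoeff_combination_mul hf hz1 hz2 n (z - z1) (z - z2)
      (((z - z1) * (z - z2)) ^ n)
  rw [sub_eq_iff_eq_add', ← hf.two_pi_i_inv_smul_circleIntegral_sub_inv_smul hz,
    circleIntegral.integral_congr (pos_of_mem_ball hz).le kernel_expansion,
    circleIntegral.integral_add (.fun_sum _ hterm)
      (circleIntegrable_twoPointTaylor_remainder hf hz1 hz2 hz N),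
    circleIntegral.integral_fun_sum hterm, smul_eq_mul, mul_add, Finset.mul_sum, one_div]
  simp only [two_pi_I_inv_mul_circleIntegral_cauchyKernelCoeff_combination_mul hf hz1 hz2 h12]

end TwoPointExpansion

/-- Cauchy integral representation of the remainder of the two-point Taylor expansion:
`f(z) − S_N(z) = (1/(2πi)) ∮_{|w−c|=R} f(w)(z−z1)^N(z−z2)^N/((w−z1)^N(w−z2)^N(w−z)) dw`. -/
theorem twoPointTaylor_remainder_eq_circleIntegral
    (c : ℂ) (R : ℝ) (hR : 0 < R) (f : ℂ → ℂ)
    (U : Set ℂ) (hU : IsOpen U) (hUB : Metric.closedBall c R ⊆ U)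
    (hf : DifferentiableOn ℂ f U)
    (z1 z2 : ℂ) (hz1 : z1 ∈ Metric.ball c R) (hz2 : z2 ∈ Metric.ball c R)
    (h12 : z1 ≠ z2) (z : ℂ) (hz : z ∈ Metric.ball c R)
    (N : ℕ) (hN : 1 ≤ N) :
    f z - ∑ n ∈ Finset.range N,
        (twoPointCoeff f z1 z2 n * (z - z1) + twoPointCoeff f z2 z1 n * (z - z2)) *
          ((z - z1) * (z - z2)) ^ n
      = (1 / (2 * Real.pi * Complex.I)) *
          ∮ w in C(c, R), f w * (z - z1) ^ N * (z - z2) ^ N /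
            ((w - z1) ^ N * (w - z2) ^ N * (w - z)) := by
  have hfR : DiffContOnCl ℂ f (Metric.ball c R) :=
    (hf.mono (Metric.closure_ball_subset_closedBall.trans hUB)).diffContOnCl
  exact twoPointTaylor_remainder_eq_circleIntegral_general hfR hz1 hz2 h12 hz N
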